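/- Let u be an integer polynomial, r_0 an integer, and set r_n = u^{(n)}(r_0) for all n ≥ 0. Then the following are equivalent: (a) r_n = 0 for infinitely many n; (b) there exists a positive integer m such that either r_m = 0 and r_{m+1} = 0, or r_m = 0 and r_{m+2} = 0. -/

import Mathlib

/-!
A zero repeated infinitely often makes `0` a periodic point of `u`, and conversely a zero that
recurs once recurs forever by periodicity. The substance is that an integer polynomial returning
to `0` does so after at most two steps (`eval_eval_zero_of_periodic`). Write `s n` for the orbit
of `0` and `d n = s (n + 1) - s n`. Since `x - y ∣ u(x) - u(y)`, each `d n` divides `d (n + 1)`, and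
periodicity closes the chain of divisibilities, so `d (n + 1) = ± d n`. If the sign `-` ever occurs,
then `s (n + 2) = s n`, which propagates along the orbit to `0`. Otherwise `d` is constant, the orbit
is the arithmetic progression `n * s 1`, and its return to `0` forces `s 1 = 0`.
-/

open Polynomial

/-- `polyIter u n r` is the `n`-fold iterate `u^{(n)}(r)` of the integer polynomial `u` at `r`. -/
def polyIter (u : Polynomial ℤ) (n : ℕ) (r : ℤ) : ℤ := (fun x => u.eval x)^[n] r

lemma polyIter_add (u : Polynomial ℤ) (m n : ℕ) (x : ℤ) :
    polyIter u (m + n) x = polyIter u m (polyIter u n x) :=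
  Function.iterate_add_apply _ m n x

lemma polyIter_succ (u : Polynomial ℤ) (n : ℕ) (x : ℤ) :
    polyIter u (n + 1) x = u.eval (polyIter u n x) :=
  Function.iterate_succ_apply' _ n x

lemma polyIter_mul_zero {u : Polynomial ℤ} {p : ℕ} (h : polyIter u p 0 = 0) (i : ℕ) :
    polyIter u (p * i) 0 = 0 := by
  induction i with
  | zero => rfl
  | succ i ih => rw [Nat.mul_succ, polyIter_add, h, ih]

/-- A periodic point `0` of an integer polynomial has period dividing two. -/
lemma eval_eval_zero_of_periodic {u : Polynomial ℤ} {p : ℕ} (hp : 0 < p)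
    (h : polyIter u p 0 = 0) : polyIter u 2 0 = 0 := by
  by_cases hn : ∃ n, polyIter u (n + 2) 0 = polyIter u n 0
  · obtain ⟨n, hn⟩ := hn
    -- Push the relation forward from `n` to the multiple `p * n ≥ n` of the period.
    obtain ⟨t, ht⟩ := Nat.exists_eq_add_of_le (Nat.le_mul_of_pos_left n hp)
    have h0 := polyIter_mul_zero h n
    calc polyIter u 2 0 = polyIter u (2 + p * n) 0 := by rw [polyIter_add, h0]
      _ = polyIter u (t + (n + 2)) 0 := by rw [ht]; congr 1; omega
      _ = polyIter u (t + n) 0 := by rw [polyIter_add, hn, ← polyIter_add]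
      _ = 0 := by rw [add_comm, ← ht, h0]
  · push Not at hn
    set s : ℕ → ℤ := fun n => polyIter u n 0 with hs
    have s_zero : s 0 = 0 := rfl
    have s_per (n : ℕ) : s (n + p) = s n := by simp only [hs, polyIter_add, h]
    have dvd_succ (n : ℕ) : s (n + 1) - s n ∣ s (n + 2) - s (n + 1) := by
      have := Polynomial.sub_dvd_eval_sub (s (n + 1)) (s n) u
      simpa only [hs, polyIter_succ] using this
    have dvd_add (n k : ℕ) : s (n + 1) - s n ∣ s (n + k + 1) - s (n + k) := by
      induction k with
      | zero => exact dvd_rfl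
      | succ k ih => exact ih.trans (dvd_succ (n + k))
    have d_const (n : ℕ) : s (n + 2) - s (n + 1) = s (n + 1) - s n := by
      have back : s (n + 2) - s (n + 1) ∣ s (n + 1) - s n := by
        have := dvd_add (n + 1) (p - 1)
        rwa [show n + 1 + (p - 1) + 1 = (n + 1) + p by omega,
          show n + 1 + (p - 1) = n + p by omega, s_per, s_per] at this
      rcases Int.natAbs_eq_natAbs_iff.mp (Int.natAbs_eq_of_dvd_dvd back (dvd_succ n)) with e | e
      · exact e
      · exact absurd (by linarith : s (n + 2) = s n) (hn n)
    have d_eq (n : ℕ) : s (n + 1) - s n = s 1 := by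
      induction n with
      | zero => simp [s_zero]
      | succ n ih => rw [d_const n, ih]
    have s_eq (n : ℕ) : s n = n * s 1 := by
      induction n with
      | zero => simp [s_zero]
      | succ n ih => push_cast; linarith [d_eq n]
    have h1 : (p : ℤ) * s 1 = 0 := (s_eq p).symm.trans h
    have s_one : s 1 = 0 := (mul_eq_zero.mp h1).resolve_left (by exact_mod_cast hp.ne')
    have := s_eq 2
    rwa [s_one, mul_zero] at this

theorem stmt_13 (u : Polynomial ℤ) (r0 : ℤ) (r : ℕ → ℤ)
    (hr : ∀ n : ℕ, r n = polyIter u n r0) :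
    {n : ℕ | r n = 0}.Infinite ↔
      ∃ m : ℕ, 0 < m ∧ ((r m = 0 ∧ r (m + 1) = 0) ∨ (r m = 0 ∧ r (m + 2) = 0)) := by
  have shift {m : ℕ} (hm : r m = 0) (k : ℕ) : r (m + k) = polyIter u k 0 := by
    rw [hr, add_comm, polyIter_add, ← hr, hm]
  constructor
  · intro hinf
    obtain ⟨m, hm, hm0⟩ := hinf.exists_gt 0
    obtain ⟨n, hn, hmn⟩ := hinf.exists_gt m
    obtain ⟨p, rfl⟩ := Nat.exists_eq_add_of_lt hmn
    refine ⟨m, hm0, Or.inr ⟨hm, ?_⟩⟩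
    rw [shift hm]
    exact eval_eval_zero_of_periodic p.succ_pos ((shift hm (p + 1)).symm.trans hn)
  · have key {m j : ℕ} (hj : 0 < j) (hm : r m = 0) (hmj : r (m + j) = 0) :
        {n : ℕ | r n = 0}.Infinite := by
      refine Set.infinite_of_injective_forall_mem (f := fun i : ℕ => m + j * i) ?_ fun i => ?_
      · intro a b hab
        exact Nat.eq_of_mul_eq_mul_left hj (Nat.add_left_cancel hab)
      · exact (shift hm _).trans (polyIter_mul_zero ((shift hm j).symm.trans hmj) i)
    rintro ⟨m, -, ⟨h1, h2⟩ | ⟨h1, h2⟩⟩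
    · exact key one_pos h1 h2
    · exact key two_pos h1 h2
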